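/- Let G be a finite simple graph, let D ≥ 1 be an integer, and let S be a set of vertices such that every vertex x with deg_G(x) ≥ D has a neighbor in S. Let u, v be vertices and let P be a walk from u to v whose support contains a vertex x with deg_G(x) ≥ D. Then there exists s ∈ S with d_G(u,s) + d_G(s,v) ≤ |P| + 2, where |P| is the number of edges of P. In particular, if some walk from u to v has maximum vertex degree in [D, 2D], then d_G(u,v) ≤ min_{s ∈ S} (d_G(u,s) + d_G(s,v)) ≤ d_D(u,v) + 2. -/

import Mathlib

/-- Explicit-walk form: some `s ∈ S` has walks `u → s → v` of total length `|P| + 2`. -/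
theorem hitting_set_detour_walks {V : Type*} [Fintype V]
    (G : SimpleGraph V) [DecidableRel G.Adj] (D : ℕ) (S : Set V)
    (hS : ∀ x : V, D ≤ G.degree x → ∃ s ∈ S, G.Adj x s)
    (u v : V) (P : G.Walk u v) (hx : ∃ x ∈ P.support, D ≤ G.degree x) :
    ∃ s ∈ S, ∃ (p : G.Walk u s) (q : G.Walk s v), p.length + q.length = P.length + 2 := by
  obtain ⟨x, hxP, hxD⟩ := hx
  obtain ⟨s, hs, hadj⟩ := hS x hxD
  obtain ⟨q, r, rfl⟩ := SimpleGraph.Walk.mem_support_iff_exists_append.mp hxP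
  refine ⟨s, hs, q.concat hadj, SimpleGraph.Walk.cons hadj.symm r, ?_⟩
  simp only [SimpleGraph.Walk.length_concat, SimpleGraph.Walk.length_cons,
    SimpleGraph.Walk.length_append]
  omega

/-- If every vertex of degree at least `D` has a neighbor in `S`, and a walk `P` from
`u` to `v` passes through some vertex of degree at least `D`, then some `s ∈ S`
satisfies `d(u,v) ≤ d(u,s) + d(s,v) ≤ |P| + 2`. -/
theorem hitting_set_detour {V : Type*} [Fintype V]
    (G : SimpleGraph V) [DecidableRel G.Adj] (D : ℕ) (hD : 1 ≤ D) (S : Set V)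
    (hS : ∀ x : V, D ≤ G.degree x → ∃ s ∈ S, G.Adj x s)
    (u v : V) (P : G.Walk u v) (hx : ∃ x ∈ P.support, D ≤ G.degree x) :
    ∃ s ∈ S, G.dist u v ≤ G.dist u s + G.dist s v ∧
      G.dist u s + G.dist s v ≤ P.length + 2 := by
  obtain ⟨s, hs, p, q, h⟩ := hitting_set_detour_walks G D S hS u v P hx
  refine ⟨s, hs, ?_, ?_⟩
  · obtain ⟨p', hp⟩ := p.reachable.exists_walk_length_eq_dist
    obtain ⟨q', hq⟩ := q.reachable.exists_walk_length_eq_dist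
    rw [← hp, ← hq, ← SimpleGraph.Walk.length_append]
    exact SimpleGraph.dist_le _
  · have h1 := SimpleGraph.dist_le p
    have h2 := SimpleGraph.dist_le q
    omega
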